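/- arXiv:1311.3657 — 2 statements merged into one kernel-verified Lean document; each statement's English description precedes it below -/
import Mathlib

section
/- Let F be a slant Riemannian submersion with slant angle θ from a cosymplectic manifold M(φ, ξ, η, g_M) onto a Riemannian manifold (N, g_N), with ξ vertical. Then for all vertical vector fields U, V: g_M(ψU, ψV) = cos²θ·(g_M(U, V) − η(U)η(V)) and g_M(ωU, ωV) = sin²θ·(g_M(U, V) − η(U)η(V)). -/
/-
An algebraic model of a (slant) Riemannian submersion `F` from a cosymplectic
manifold `(M, φ, ξ, η, g_M)` onto a Riemannian manifold `(N, g_N)`.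
`E` plays the role of the vector fields on `M`, with `g_M` modelled by the
real inner product `⟪·, ·⟫`, and `E'` plays the role of the vector fields
along `F` (sections of the pull-back bundle `F⁻¹TN`), with `g_N` modelled by
its inner product.  The 1-form `η` is `η X = ⟪X, ξ⟫`.
-/

noncomputable section

open scoped RealInnerProductSpace
open Real

structure CosymplecticRS (E E' : Type) [NormedAddCommGroup E] [InnerProductSpace ℝ E]
    [NormedAddCommGroup E'] [InnerProductSpace ℝ E'] where
  /-- the Levi-Civita covariant derivative `∇` of `(M, g_M)` (modelled algebraically) -/
  nab : E →ₗ[ℝ] E →ₗ[ℝ] E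
  /-- the orthogonal projection `𝒱` onto the vertical distribution `ker F_*` -/
  pV : E →ₗ[ℝ] E
  pV_idem : ∀ X, pV (pV X) = pV X
  pV_symm : ∀ X Y, ⟪pV X, Y⟫ = ⟪X, pV Y⟫
  /-- the `(1,1)`-tensor field `φ` of the almost contact metric structure -/
  phi : E →ₗ[ℝ] E
  /-- the characteristic (Reeb) vector field `ξ` -/
  xi : E
  /-- `φ² = -I + η ⊗ ξ` -/
  phi_sq : ∀ X, phi (phi X) = -X + ⟪X, xi⟫ • xi
  /-- `φ ξ = 0` -/
  phi_xi : phi xi = 0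
  /-- `η ∘ φ = 0` -/
  eta_phi : ∀ X, ⟪phi X, xi⟫ = 0
  /-- `η(ξ) = 1` -/
  xi_unit : ⟪xi, xi⟫ = 1
  /-- `g_M(φX, φY) = g_M(X,Y) - η(X) η(Y)` -/
  phi_metric : ∀ X Y, ⟪phi X, phi Y⟫ = ⟪X, Y⟫ - ⟪X, xi⟫ * ⟪Y, xi⟫
  /-- cosymplectic: `∇φ = 0` -/
  nab_phi : ∀ X Y, nab X (phi Y) = phi (nab X Y)
  /-- cosymplectic: `∇ξ = 0` -/
  nab_xi : ∀ X, nab X xi = 0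
  /-- the differential `F_*` of the submersion -/
  Fstar : E →ₗ[ℝ] E'
  /-- `F` has maximal rank -/
  Fstar_surj : Function.Surjective Fstar
  /-- the vertical distribution is `ker F_*` -/
  ker_Fstar : ∀ X, Fstar X = 0 ↔ pV X = X
  /-- `F_*` preserves the lengths of horizontal vectors -/
  Fstar_isom : ∀ X, pV X = 0 → ‖Fstar X‖ = ‖X‖
  /-- the pull-back connection `∇^F` on `F⁻¹TN` (modelled algebraically) -/
  nabF : E →ₗ[ℝ] E' →ₗ[ℝ] E'
  /-- for a Riemannian submersion, `(∇F_*)(X,Y) = 0` for horizontal `X`, `Y` -/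
  sff_horiz : ∀ X Y, pV X = 0 → pV Y = 0 → nabF X (Fstar Y) = Fstar (nab X Y)
  /-- the second fundamental form `∇F_*` is symmetric -/
  sff_symm : ∀ X Y, nabF X (Fstar Y) - Fstar (nab X Y) = nabF Y (Fstar X) - Fstar (nab Y X)

namespace CosymplecticRS

variable {E E' : Type} [NormedAddCommGroup E] [InnerProductSpace ℝ E]
  [NormedAddCommGroup E'] [InnerProductSpace ℝ E'] (S : CosymplecticRS E E')

/-- the horizontal projection `ℋ` -/
def pH (X : E) : E := X - S.pV X

/-- `X` is a vertical vector field -/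
def Vert (X : E) : Prop := S.pV X = X

/-- `X` is a horizontal vector field -/
def Horiz (X : E) : Prop := S.pV X = 0

/-- the O'Neill tensor `T`, `T_U W = ℋ∇_{𝒱U}(𝒱W) + 𝒱∇_{𝒱U}(ℋW)` -/
def T (U W : E) : E := S.pH (S.nab (S.pV U) (S.pV W)) + S.pV (S.nab (S.pV U) (S.pH W))

/-- the O'Neill tensor `A`, `A_X Y = 𝒱∇_{ℋX}(ℋY) + ℋ∇_{ℋX}(𝒱Y)` -/
def A (X Y : E) : E := S.pV (S.nab (S.pH X) (S.pH Y)) + S.pH (S.nab (S.pH X) (S.pV Y))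

/-- `ψU`, the vertical part of `φU` -/
def psi (U : E) : E := S.pV (S.phi U)

/-- `ωU`, the horizontal part of `φU` -/
def om (U : E) : E := S.pH (S.phi U)

/-- `BX`, the vertical part of `φX` -/
def B (X : E) : E := S.pV (S.phi X)

/-- `CX`, the horizontal part of `φX` -/
def C (X : E) : E := S.pH (S.phi X)

/-- `F` is slant with slant angle `θ`: for every nonzero vertical `X` (orthogonal
to `ξ`), the angle between `φX` and the vertical space is `θ`, i.e.
`‖ψX‖ = cos θ · ‖φX‖`. -/
def HasSlantAngle (θ : ℝ) : Prop :=
  ∀ X, S.Vert X → X ≠ 0 → ⟪X, S.xi⟫ = 0 → ‖S.psi X‖ = Real.cos θ * ‖S.phi X‖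

/-- `F` is a slant Riemannian submersion -/
def IsSlant : Prop := ∃ θ ∈ Set.Icc (0:ℝ) (Real.pi / 2), S.HasSlantAngle θ

/-- the second fundamental form of `F`: `(∇F_*)(X,Y) = ∇^F_X F_* Y - F_*(∇_X Y)` -/
def SFF (X Y : E) : E' := S.nabF X (S.Fstar Y) - S.Fstar (S.nab X Y)

/-- `F` is a harmonic map: its tension field `τ(F) = Σᵢ (∇F_*)(eᵢ, eᵢ)` vanishes -/
def IsHarmonic : Prop :=
  ∀ b : OrthonormalBasis (Fin (Module.finrank ℝ E)) ℝ E, ∑ i, S.SFF (b i) (b i) = 0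

/-- `F` is a totally geodesic map: `∇F_* ≡ 0` -/
def IsTotallyGeodesicMap : Prop := ∀ X Y, S.SFF X Y = 0

/-- `ω` is parallel: `(∇_U ω)W = ℋ∇_U(ωW) - ω(𝒱∇_U W) = 0` for vertical `U`, `W` -/
def OmParallel : Prop :=
  ∀ U W, S.Vert U → S.Vert W → S.pH (S.nab U (S.om W)) = S.om (S.pV (S.nab U W))

/-- the vertical distribution `ker F_*` as a submodule -/
def vertSub : Submodule ℝ E := LinearMap.ker S.Fstar

/-- the horizontal distribution `(ker F_*)^⊥` as a submodule -/
def horizSub : Submodule ℝ E := LinearMap.ker S.pV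

/-- the curvature tensor of a cosymplectic space form `M(c)` of constant
`φ`-sectional curvature `c` -/
def Rc (c : ℝ) (X Y Z : E) : E :=
  (c/4) • (⟪Y, Z⟫ • X - ⟪X, Z⟫ • Y + (⟪X, S.xi⟫ * ⟪Z, S.xi⟫) • Y
    - (⟪Y, S.xi⟫ * ⟪Z, S.xi⟫) • X + (⟪X, Z⟫ * ⟪Y, S.xi⟫) • S.xi
    - (⟪Y, Z⟫ * ⟪X, S.xi⟫) • S.xi + ⟪S.phi Y, Z⟫ • S.phi X
    - ⟪S.phi X, Z⟫ • S.phi Y - (2 * ⟪S.phi X, Y⟫) • S.phi Z)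

/-- the sectional curvature `K̂(U ∧ V)` of a fibre of a submersion of a
cosymplectic space form `M(c)`, computed through the Gauss equation
`K̂(U∧V) = K(U∧V) - ‖T_U V‖² + g(T_U U, T_V V)` -/
def Khat (c : ℝ) (U V : E) : ℝ :=
  ⟪S.Rc c U V V, U⟫ - ‖S.T U V‖ ^ 2 + ⟪S.T U U, S.T V V⟫

end CosymplecticRS

/-- For a slant Riemannian submersion with slant angle `θ` from a
cosymplectic manifold onto a Riemannian manifold, with `ξ` vertical:
`g_M(ψU, ψV) = cos²θ (g_M(U,V) - η(U)η(V))` and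
`g_M(ωU, ωV) = sin²θ (g_M(U,V) - η(U)η(V))` for all vertical `U, V`. -/
theorem stmt2 {E E' : Type} [NormedAddCommGroup E] [InnerProductSpace ℝ E]
    [NormedAddCommGroup E'] [InnerProductSpace ℝ E']
    (S : CosymplecticRS E E') (θ : ℝ) (hθ : θ ∈ Set.Icc (0:ℝ) (Real.pi / 2))
    (hsl : S.HasSlantAngle θ) (hxi : S.Vert S.xi) :
    ∀ U V, S.Vert U → S.Vert V →
      ⟪S.psi U, S.psi V⟫ = Real.cos θ ^ 2 * (⟪U, V⟫ - ⟪U, S.xi⟫ * ⟪V, S.xi⟫) ∧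
      ⟪S.om U, S.om V⟫ = Real.sin θ ^ 2 * (⟪U, V⟫ - ⟪U, S.xi⟫ * ⟪V, S.xi⟫) := by
  have key : ∀ W, S.Vert W →
      ⟪S.psi W, S.psi W⟫ = Real.cos θ ^ 2 * ⟪S.phi W, S.phi W⟫ := by
    intro W hW
    have hphi : S.phi (W - ⟪W, S.xi⟫ • S.xi) = S.phi W := by
      rw [map_sub, map_smul, S.phi_xi, smul_zero, sub_zero]
    have hv : S.Vert (W - ⟪W, S.xi⟫ • S.xi) := by
      unfold CosymplecticRS.Vert at *
      rw [map_sub, map_smul, hW, hxi]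
    have ho : ⟪W - ⟪W, S.xi⟫ • S.xi, S.xi⟫ = 0 := by
      rw [inner_sub_left, real_inner_smul_left, S.xi_unit]; ring
    by_cases h0 : W - ⟪W, S.xi⟫ • S.xi = 0
    · have hz : S.phi W = 0 := by rw [← hphi, h0, map_zero]
      simp [CosymplecticRS.psi, hz]
    · have h := hsl _ hv h0 ho
      unfold CosymplecticRS.psi at *
      rw [hphi] at h
      rw [real_inner_self_eq_norm_sq, real_inner_self_eq_norm_sq, h]; ring
  intro U V hU hV
  have hUV : S.Vert (U + V) := by
    unfold CosymplecticRS.Vert at *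
    rw [map_add, hU, hV]
  have h1 : ⟪S.psi U, S.psi V⟫ = Real.cos θ ^ 2 * ⟪S.phi U, S.phi V⟫ := by
    have a := key _ hUV
    have b := key _ hU
    have c := key _ hV
    unfold CosymplecticRS.psi at *
    simp only [map_add, inner_add_left, inner_add_right] at a
    rw [real_inner_comm (S.pV (S.phi U)) (S.pV (S.phi V)),
      real_inner_comm (S.phi U) (S.phi V)] at a
    rw [real_inner_comm (S.pV (S.phi V)) (S.pV (S.phi U)),
      real_inner_comm (S.phi V) (S.phi U)] at *
    linarith
  have h2 : ⟪S.om U, S.om V⟫ = ⟪S.phi U, S.phi V⟫ - ⟪S.psi U, S.psi V⟫ := by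
    unfold CosymplecticRS.psi CosymplecticRS.om CosymplecticRS.pH
    simp only [inner_sub_left, inner_sub_right, S.pV_symm, S.pV_idem]
    ring
  refine ⟨by rw [h1, S.phi_metric], ?_⟩
  rw [h2, h1, S.phi_metric, Real.sin_sq]; ring
end
end

section
/- Let F be a proper slant Riemannian submersion from a cosymplectic manifold M(φ, ξ, η, g_M) onto a Riemannian manifold (N, g_N), with ξ vertical. Let μ be the orthogonal complement of ω(ker F_*) in (ker F_*)^⊥, so that (ker F_*)^⊥ = ω(ker F_*) ⊕ μ. Then μ is invariant under the endomorphism φ, i.e. φ(μ) ⊆ μ. -/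
/-
An algebraic model of a (slant) Riemannian submersion `F` from a cosymplectic
manifold `(M, φ, ξ, η, g_M)` onto a Riemannian manifold `(N, g_N)`.
`E` plays the role of the vector fields on `M`, with `g_M` modelled by the
real inner product `⟪·, ·⟫`, and `E'` plays the role of the vector fields
along `F` (sections of the pull-back bundle `F⁻¹TN`), with `g_N` modelled by
its inner product.  The 1-form `η` is `η X = ⟪X, ξ⟫`.
-/

noncomputable section

open scoped RealInnerProductSpace
open Real

/-- For a proper slant Riemannian submersion from a cosymplectic
manifold onto a Riemannian manifold with `ξ` vertical, the orthogonal complement `μ`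
of `ω(ker F_*)` in `(ker F_*)^⊥` is invariant under `φ`:  if `X` is horizontal and
orthogonal to all `ωU` (`U` vertical), then so is `φX`. -/
theorem stmt3 {E E' : Type} [NormedAddCommGroup E] [InnerProductSpace ℝ E]
    [NormedAddCommGroup E'] [InnerProductSpace ℝ E']
    (S : CosymplecticRS E E') (θ : ℝ) (hproper : θ ∈ Set.Ioo (0:ℝ) (Real.pi / 2))
    (hsl : S.HasSlantAngle θ) (hxi : S.Vert S.xi) :
    ∀ X, S.Horiz X → (∀ U, S.Vert U → ⟪X, S.om U⟫ = 0) →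
      S.Horiz (S.phi X) ∧ ∀ U, S.Vert U → ⟪S.phi X, S.om U⟫ = 0 := by
  intro X hX h
  have hX' : S.pV X = 0 := hX
  have skew : ∀ Y Z, ⟪S.phi Y, Z⟫ = -⟪Y, S.phi Z⟫ := by
    intro Y Z
    have h1 := S.phi_metric Y (S.phi Z)
    rw [S.phi_sq, S.eta_phi, inner_add_right, inner_neg_right, inner_smul_right, S.eta_phi] at h1
    linarith
  have orth : ∀ Y Z, S.pV Y = 0 → S.pV Z = Z → ⟪Y, Z⟫ = 0 := by
    intro Y Z hY hZ
    rw [← hZ, ← S.pV_symm, hY, inner_zero_left]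
  have h2 : ∀ U, S.Vert U → ⟪S.phi X, U⟫ = 0 := by
    intro U hU
    have h3 := h U hU
    unfold CosymplecticRS.om CosymplecticRS.pH at h3
    rw [inner_sub_right, orth X _ hX' (S.pV_idem _)] at h3
    rw [skew]
    linarith
  have h4 : S.pV (S.phi X) = 0 := by
    rw [← inner_self_eq_zero (𝕜 := ℝ), S.pV_symm, S.pV_idem]
    exact h2 _ (S.pV_idem _)
  refine ⟨h4, fun U hU => ?_⟩
  unfold CosymplecticRS.om CosymplecticRS.pH
  rw [inner_sub_right, orth _ _ h4 (S.pV_idem _), S.phi_metric, orth X U hX' hU,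
    orth X S.xi hX' hxi]
  ring
end
end
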